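/- Let E ∈ 𝓔, and for λ ∈ 𝔻 let δ_λ ∈ E* be the evaluation functional f ↦ f(λ). If liminf_{|λ|→1⁻} ‖δ_λ‖ < +∞, then there exist ζ ∈ ℂ with |ζ| = 1 and a continuous linear functional φ ∈ E* such that φ(1) = 1, φ ∘ S|_E = ζ·φ, and Ker(φ) is a nontrivial closed z-invariant subspace of E having the division property. -/

import Mathlib

noncomputable section

open Metric Set Filter Topology
open scoped Classical

/-- Functions holomorphic on the open unit disc, normalized to vanish outside it.
This is our model of `Hol(𝔻)`. -/
def HolDisc : Set (ℂ → ℂ) :=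
  {f | DifferentiableOn ℂ f (Metric.ball (0:ℂ) 1) ∧ ∀ z ∉ Metric.ball (0:ℂ) 1, f z = 0}

/-- The constant function `1` of `Hol(𝔻)` (normalized to vanish outside the disc). -/
def oneD : ℂ → ℂ := fun z => if z ∈ Metric.ball (0:ℂ) 1 then 1 else 0

/-- The shift `S`, `(Sf)(z) = z f(z)`, as a linear map. -/
def shiftL : (ℂ → ℂ) →ₗ[ℂ] (ℂ → ℂ) where
  toFun f := fun z => z * f z
  map_add' f g := by funext z; simp [mul_add]
  map_smul' c f := by funext z; simp [smul_eq_mul]; ring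

/-- Division: `f_λ(z) = (f(z) - f(λ))/(z - λ)` for `z ≠ λ`, `f_λ(λ) = f'(λ)`,
normalized to vanish outside the disc.  `fdivB 0` is the backward shift `T`. -/
def fdivB (lam : ℂ) (f : ℂ → ℂ) : ℂ → ℂ := fun z =>
  if z ∈ Metric.ball (0:ℂ) 1 then
    (if z = lam then deriv f lam else (f z - f lam) / (z - lam))
  else 0

/-- The reflected model of the shift `S⁻` on `H₀(ℂ ∖ 𝔻̄)`: a function `h` on `{|ζ|>1}`
vanishing at `∞` is represented by `k(w) = h(1/w)` (holomorphic on `𝔻`, `k 0 = 0`);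
`S⁻` corresponds to `k ↦ (k(z) - k(0))/z - k'(0)·1`. -/
def negShiftF (k : ℂ → ℂ) : ℂ → ℂ := fun z => fdivB 0 k z - deriv k 0 * oneD z

/-- `n`-th Taylor coefficient at the origin. -/
def tCoeff (n : ℕ) (f : ℂ → ℂ) : ℂ := iteratedDeriv n f 0 / (Nat.factorial n)

/-! A point evaluation `δ_λ` is an eigenvector of the adjoint of the shift, with eigenvalue `λ`.
By Banach–Alaoglu, bounded evaluations at points tending to the circle have a weak-* limit point
`φ`, for which `φ(1) = 1` and `φ ∘ S = ζ φ` with `|ζ| = 1`.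
For `|λ| < 1`, the resolvent identity `f_λ = (1 - λT)⁻¹ T f` shows that `E` contains `f_λ`.
If moreover `f(λ) = 0`, then `(S - λ) f_λ = f`, so `(ζ - λ) φ(f_λ) = φ(f)`; since `ζ ≠ λ`, the
function `f_λ` lies in `Ker φ` whenever `f` does. -/

section Division

variable {f g : ℂ → ℂ} {lam z : ℂ}

lemma fdivB_of_mem_ball (hz : z ∈ ball (0 : ℂ) 1) : fdivB lam f z = dslope f lam z := by
  rcases eq_or_ne z lam with rfl | hne
  · rw [fdivB, if_pos hz, if_pos rfl, dslope_same]
  · rw [fdivB, if_pos hz, if_neg hne, dslope_of_ne f hne, slope_def_field]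

lemma fdivB_of_notMem_ball (hz : z ∉ ball (0 : ℂ) 1) : fdivB lam f z = 0 :=
  if_neg hz

lemma sub_mul_fdivB (hz : z ∈ ball (0 : ℂ) 1) : (z - lam) * fdivB lam f z = f z - f lam := by
  rw [fdivB_of_mem_ball hz, ← smul_eq_mul, sub_smul_dslope]

lemma shiftL_fdivB_sub_smul (hf : ∀ z ∉ ball (0 : ℂ) 1, f z = 0) (hlam : f lam = 0) :
    shiftL (fdivB lam f) - lam • fdivB lam f = f := by
  funext z
  change z * fdivB lam f z - lam * fdivB lam f z = f z
  by_cases hz : z ∈ ball (0 : ℂ) 1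
  · rw [← sub_mul, sub_mul_fdivB hz, hlam, sub_zero]
  · rw [fdivB_of_notMem_ball hz, hf z hz, mul_zero, mul_zero, sub_zero]

lemma hasDerivAt_of_sub_eq_sub_smul {𝕜 E : Type*} [NontriviallyNormedField 𝕜]
    [NormedAddCommGroup E] [NormedSpace 𝕜 E] {f g : 𝕜 → E} {a : 𝕜} (hg : ContinuousAt g a)
    (hfg : ∀ᶠ z in 𝓝[≠] a, f z - f a = (z - a) • g z) : HasDerivAt f (g a) a := by
  rw [hasDerivAt_iff_tendsto_slope]
  refine (hg.tendsto.mono_left nhdsWithin_le_nhds).congr' ?_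
  filter_upwards [hfg, self_mem_nhdsWithin] with z hz hne
  rw [slope_def_module, hz, inv_smul_smul₀ (sub_ne_zero.2 hne)]

lemma eq_fdivB_of_sub_mul_eq (hg : ContinuousAt g lam) (hg₀ : ∀ z ∉ ball (0 : ℂ) 1, g z = 0)
    (hfg : ∀ z ∈ ball (0 : ℂ) 1, (z - lam) * g z = f z - f lam) : g = fdivB lam f := by
  funext z
  by_cases hz : z ∈ ball (0 : ℂ) 1
  · rcases eq_or_ne z lam with rfl | hne
    · have hderiv : HasDerivAt f (g z) z := hasDerivAt_of_sub_eq_sub_smul hg <|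
        eventually_nhdsWithin_of_eventually_nhds <|
          (isOpen_ball.eventually_mem hz).mono fun w hw => (hfg w hw).symm
      rw [fdivB_of_mem_ball hz, dslope_same, hderiv.deriv]
    · exact mul_left_cancel₀ (sub_ne_zero.2 hne) ((hfg z hz).trans (sub_mul_fdivB hz).symm)
  · rw [hg₀ z hz, fdivB_of_notMem_ball hz]

lemma eq_fdivB_of_sub_smul_fdivB_zero (hg : ContinuousAt g lam)
    (hg₀ : ∀ z ∉ ball (0 : ℂ) 1, g z = 0) (hlam : lam ∈ ball (0 : ℂ) 1)
    (hfg : g - lam • fdivB 0 g = fdivB 0 f) : g = fdivB lam f := by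
  have hmul : ∀ z ∈ ball (0 : ℂ) 1, (z - lam) * g z = f z - f 0 - lam * g 0 := by
    intro z hz
    have hfg_z : g z - lam * fdivB 0 g z = fdivB 0 f z := congrFun hfg z
    have hTf : (z - 0) * fdivB 0 f z = f z - f 0 := sub_mul_fdivB hz
    have hTg : (z - 0) * fdivB 0 g z = g z - g 0 := sub_mul_fdivB hz
    linear_combination z * hfg_z + hTf + lam * hTg
  refine eq_fdivB_of_sub_mul_eq hg hg₀ fun z hz => ?_
  linear_combination hmul z hz - hmul lam hlam

end Division

lemma isUnit_one_sub_smul_of_spectralRadius_le_one {𝕜 A : Type*} [NontriviallyNormedField 𝕜]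
    [NormedRing A] [NormedAlgebra 𝕜 A] {a : A} (ha : spectralRadius 𝕜 a ≤ 1) {c : 𝕜}
    (hc : ‖c‖ < 1) : IsUnit (1 - c • a) :=
  spectrum.isUnit_one_sub_smul_of_lt_inv_radius <|
    (ENNReal.coe_lt_one_iff.2 hc).trans_le (ENNReal.one_le_inv.2 ha)

lemma exists_eq_fdivB {X : Type*} [NormedAddCommGroup X] [NormedSpace ℂ X] {ι : X →ₗ[ℂ] (ℂ → ℂ)}
    (hhol : ∀ f, ι f ∈ HolDisc) {T : X →L[ℂ] X} (hT : ∀ f, ι (T f) = fdivB 0 (ι f))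
    (hTrad : spectralRadius ℂ T ≤ 1) (f : X) {lam : ℂ} (hlam : lam ∈ ball (0 : ℂ) 1) :
    ∃ g, ι g = fdivB lam (ι f) := by
  obtain ⟨R, hR⟩ :=
    (isUnit_one_sub_smul_of_spectralRadius_le_one hTrad (mem_ball_zero_iff.1 hlam)).exists_right_inv
  have hresolvent : R (T f) - lam • T (R (T f)) = T f := DFunLike.congr_fun hR (T f)
  obtain ⟨hdiff, hzero⟩ := hhol (R (T f))
  refine ⟨R (T f), eq_fdivB_of_sub_smul_fdivB_zero ?_ hzero hlam ?_⟩
  · exact (hdiff.differentiableAt (isOpen_ball.mem_nhds hlam)).continuousAt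
  · rw [← hT, ← hT, ← map_smul, ← map_sub, hresolvent]

lemma mem_ker_of_apply_sub_smul_eq_zero {𝕜 X : Type*} [Field 𝕜] [AddCommGroup X] [Module 𝕜 X]
    {φ : X →ₗ[𝕜] 𝕜} {S : X → X} {c d : 𝕜} (hS : ∀ f, φ (S f) = c * φ f) (hcd : c ≠ d) {g : X}
    (hg : φ (S g - d • g) = 0) : g ∈ LinearMap.ker φ := by
  rw [map_sub, map_smul, hS, smul_eq_mul, ← sub_mul] at hg
  exact (mul_eq_zero.1 hg).resolve_left (sub_ne_zero.2 hcd)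

lemma shiftL_oneD_ne_smul (c : ℂ) : shiftL oneD ≠ c • oneD := by
  intro h
  have eq_of_mem_ball (z : ℂ) (hz : z ∈ ball (0 : ℂ) 1) : z = c := by
    simpa [shiftL, oneD, mem_ball_zero_iff.1 hz] using congrFun h z
  have hzero : (0 : ℂ) = c := eq_of_mem_ball 0 (by simp)
  have hhalf : (1 / 2 : ℂ) = c := eq_of_mem_ball (1 / 2) (by norm_num)
  norm_num [← hzero] at hhalf

lemma ker_ne_bot_of_apply_shift {X : Type*} [AddCommGroup X] [Module ℂ X]
    {ι : X →ₗ[ℂ] (ℂ → ℂ)} {S : X → X} (hS : ∀ f, ι (S f) = shiftL (ι f)) {e : X}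
    (he : ι e = oneD) {φ : X →ₗ[ℂ] ℂ} {c : ℂ} (hφ : φ (S e) = c * φ e) :
    LinearMap.ker φ ≠ ⊥ := by
  intro hbot
  have hmem : S e - c • e ∈ LinearMap.ker φ := by
    rw [LinearMap.mem_ker, map_sub, map_smul, hφ, smul_eq_mul, sub_self]
  rw [hbot, Submodule.mem_bot, sub_eq_zero] at hmem
  apply shiftL_oneD_ne_smul c
  rw [← he, ← hS, hmem, map_smul]

lemma exists_tendsto_apply_of_norm_le {𝕜 X α : Type*} [NontriviallyNormedField 𝕜] [ProperSpace 𝕜]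
    [SeminormedAddCommGroup X] [NormedSpace 𝕜 X] (U : Ultrafilter α) {d : α → StrongDual 𝕜 X}
    {C : ℝ} (hd : ∀ᶠ a in U, ‖d a‖ ≤ C) :
    ∃ φ : StrongDual 𝕜 X, ∀ f, Tendsto (fun a => d a f) U (𝓝 (φ f)) := by
  obtain ⟨ψ, -, hψ⟩ := (WeakDual.isCompact_closedBall (𝕜 := 𝕜) (0 : StrongDual 𝕜 X)
    C).ultrafilter_le_nhds' (U.map fun a => StrongDual.toWeakDual (d a))
      (hd.mono fun a ha => mem_closedBall_zero_iff.2 ha)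
  exact ⟨WeakDual.toStrongDual ψ, fun f => ((WeakDual.eval_continuous f).tendsto ψ).comp hψ⟩

lemma exists_unimodular_eigenfunctional {X α : Type*} [SeminormedAddCommGroup X]
    [NormedSpace ℂ X] {ι : X → ℂ → ℂ} {S : X → X} (hS : ∀ f, ι (S f) = shiftL (ι f)) {e : X}
    (he : ι e = oneD) {F : Filter α} [F.NeBot] {u : α → ℂ} (hu : ∀ a, u a ∈ ball (0 : ℂ) 1)
    (hlim : Tendsto (fun a => ‖u a‖) F (𝓝 1)) {d : α → StrongDual ℂ X}
    (hd : ∀ a f, d a f = ι f (u a)) {C : ℝ} (hC : ∀ a, ‖d a‖ ≤ C) :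
    ∃ ζ : ℂ, ‖ζ‖ = 1 ∧ ∃ φ : StrongDual ℂ X, φ e = 1 ∧ ∀ f, φ (S f) = ζ * φ f := by
  obtain ⟨φ, hφ⟩ := exists_tendsto_apply_of_norm_le (Ultrafilter.of F) (Eventually.of_forall hC)
  have hd_one (a : α) : d a e = 1 := by rw [hd, he, oneD, if_pos (hu a)]
  have hd_shift (a : α) (f : X) : d a (S f) = u a * d a f := by rw [hd, hd, hS]; rfl
  -- `S 1` is the identity function, so its values `u a` converge to `φ (S 1)`.
  have hζ : Tendsto u (Ultrafilter.of F) (𝓝 (φ (S e))) :=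
    (hφ (S e)).congr fun a => by rw [hd_shift, hd_one, mul_one]
  refine ⟨φ (S e), tendsto_nhds_unique hζ.norm (hlim.mono_left (Ultrafilter.of_le F)), φ, ?_, ?_⟩
  · exact tendsto_nhds_unique (hφ e) (tendsto_const_nhds.congr fun a => (hd_one a).symm)
  · intro f
    exact tendsto_nhds_unique (hφ (S f)) ((hζ.mul (hφ f)).congr fun a => (hd_shift a f).symm)

theorem statement10_general
    {X : Type*} [NormedAddCommGroup X] [NormedSpace ℂ X]
    (ι : X →ₗ[ℂ] (ℂ → ℂ)) (hinj : Function.Injective ι)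
    (hhol : ∀ f : X, ι f ∈ HolDisc)
    (Sb Tb : X →L[ℂ] X)
    (hSb : ∀ f : X, ι (Sb f) = shiftL (ι f))
    (hTb : ∀ f : X, ι (Tb f) = fdivB 0 (ι f))
    (hTrad : spectralRadius ℂ Tb ≤ 1)
    (e : X) (he : ι e = oneD)
    (δ : ℂ → (X →L[ℂ] ℂ)) (hδ : ∀ lam ∈ ball (0:ℂ) 1, ∀ f : X, δ lam f = ι f lam)
    (hliminf : ∃ (C : ℝ) (lamseq : ℕ → ℂ), (∀ n, lamseq n ∈ ball (0:ℂ) 1)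
      ∧ Tendsto (fun n => ‖lamseq n‖) atTop (𝓝 1)
      ∧ ∀ n, ‖δ (lamseq n)‖ ≤ C) :
    ∃ ζ : ℂ, ‖ζ‖ = 1 ∧ ∃ φ : X →L[ℂ] ℂ,
      φ e = 1
      ∧ (∀ f : X, φ (Sb f) = ζ * φ f)
      ∧ LinearMap.ker φ.toLinearMap ≠ ⊥
      ∧ LinearMap.ker φ.toLinearMap ≠ ⊤
      ∧ IsClosed ((LinearMap.ker φ.toLinearMap : Submodule ℂ X) : Set X)
      ∧ (∀ f ∈ LinearMap.ker φ.toLinearMap, Sb f ∈ LinearMap.ker φ.toLinearMap)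
      ∧ (∀ f ∈ LinearMap.ker φ.toLinearMap, ∀ lam ∈ ball (0:ℂ) 1,
          ι f lam = 0 →
            ∃ g ∈ LinearMap.ker φ.toLinearMap, ι g = fdivB lam (ι f)) := by
  obtain ⟨C, u, hu, hlim, hC⟩ := hliminf
  obtain ⟨ζ, hζ, φ, hφe, hφS⟩ :=
    exists_unimodular_eigenfunctional hSb he hu hlim (fun n => hδ (u n) (hu n)) hC
  refine ⟨ζ, hζ, φ, hφe, hφS, ker_ne_bot_of_apply_shift hSb he (hφS e), ?_, φ.isClosed_ker, ?_, ?_⟩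
  · intro htop
    have hφe_zero : φ e = 0 := LinearMap.mem_ker.1 (htop ▸ Submodule.mem_top)
    exact one_ne_zero (hφe.symm.trans hφe_zero)
  · intro f (hf : φ f = 0)
    exact (hφS f).trans (by rw [hf, mul_zero])
  · intro f hf lam hlam hf_lam
    obtain ⟨g, hg⟩ := exists_eq_fdivB hhol hTb hTrad f hlam
    have hSg : Sb g - lam • g = f := hinj <| by
      rw [map_sub, map_smul, hSb, hg, shiftL_fdivB_sub_smul (hhol f).2 hf_lam]
    have hζ_ne : ζ ≠ lam := by
      rintro rfl
      exact (mem_ball_zero_iff.1 hlam).ne hζ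
    exact ⟨g, mem_ker_of_apply_sub_smul_eq_zero hφS hζ_ne (hSg.symm ▸ hf), hg⟩

/-- (Proposition 4.1) If `liminf_{|λ|→1⁻} ‖δ_λ‖ < ∞` (expressed by the
existence of a sequence `λ_n ∈ 𝔻` with `|λ_n| → 1` and `‖δ_{λ_n}‖` bounded), then there
exist `ζ ∈ 𝕋` and `φ ∈ E*` with `φ(1) = 1`, `φ ∘ S = ζ φ`, such that `Ker φ` is a
nontrivial closed `z`-invariant subspace of `E` with the division property. -/
theorem statement10
    {X : Type*} [NormedAddCommGroup X] [NormedSpace ℂ X] [CompleteSpace X] [Nontrivial X]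
    (ι : X →ₗ[ℂ] (ℂ → ℂ)) (hinj : Function.Injective ι)
    (hhol : ∀ f : X, ι f ∈ HolDisc)
    (Sb Tb : X →L[ℂ] X)
    (hSb : ∀ f : X, ι (Sb f) = shiftL (ι f))
    (hTb : ∀ f : X, ι (Tb f) = fdivB 0 (ι f))
    (hSrad : spectralRadius ℂ Sb ≤ 1) (hTrad : spectralRadius ℂ Tb ≤ 1)
    -- E contains the constant function 1
    (e : X) (he : ι e = oneD)
    -- the evaluation functionals
    (δ : ℂ → (X →L[ℂ] ℂ)) (hδ : ∀ lam ∈ Metric.ball (0:ℂ) 1, ∀ f : X, δ lam f = ι f lam)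
    -- liminf_{|λ| → 1⁻} ‖δ_λ‖ < +∞
    (hliminf : ∃ (C : ℝ) (lamseq : ℕ → ℂ), (∀ n, lamseq n ∈ Metric.ball (0:ℂ) 1)
      ∧ Filter.Tendsto (fun n => ‖lamseq n‖) Filter.atTop (nhds 1)
      ∧ ∀ n, ‖δ (lamseq n)‖ ≤ C) :
    ∃ ζ : ℂ, ‖ζ‖ = 1 ∧ ∃ φ : X →L[ℂ] ℂ,
      φ e = 1
      ∧ (∀ f : X, φ (Sb f) = ζ * φ f)
      ∧ LinearMap.ker φ.toLinearMap ≠ ⊥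
      ∧ LinearMap.ker φ.toLinearMap ≠ ⊤
      ∧ IsClosed ((LinearMap.ker φ.toLinearMap : Submodule ℂ X) : Set X)
      ∧ (∀ f ∈ LinearMap.ker φ.toLinearMap, Sb f ∈ LinearMap.ker φ.toLinearMap)
      ∧ (∀ f ∈ LinearMap.ker φ.toLinearMap, ∀ lam ∈ Metric.ball (0:ℂ) 1,
          ι f lam = 0 →
            ∃ g ∈ LinearMap.ker φ.toLinearMap, ι g = fdivB lam (ι f)) :=
  statement10_general ι hinj hhol Sb Tb hSb hTb hTrad e he δ hδ hliminf
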